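/- arXiv:1908.03395 — 2 statements merged into one kernel-verified Lean document; each statement's English description precedes it below -/
import Mathlib

section
/- For every natural number k and every σ > 0 there exists a constant C > 0, depending only on k and σ, with the following property: for every nondegenerate triangle τ ⊂ ℝ² whose diameter h_τ satisfies h_τ² ≤ σ·|τ| (where |τ| is the area of τ), with element bubble function ψ_τ = 27·λ₁·λ₂·λ₃ built from the barycentric coordinates of τ, and for every polynomial function v : ℝ² → ℝ of total degree at most k, one has ∫_τ |∇(ψ_τ v)|² dx ≤ C h_τ^{-2} ∫_τ v² dx; equivalently ‖∇(ψ_τ v)‖_{0,τ} ≤ C h_τ^{-1} ‖v‖_{0,τ}. -/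
open MeasureTheory

namespace BubbleAux

abbrev E2 := EuclideanSpace ℝ (Fin 2)

/-- evaluation of a polynomial at a point of the plane -/
noncomputable def ev (p : MvPolynomial (Fin 2) ℝ) (x : E2) : ℝ := MvPolynomial.eval (fun i => x i) p

lemma ev_contDiff (p : MvPolynomial (Fin 2) ℝ) : ContDiff ℝ 1 (ev p) := by
  unfold ev
  induction p using MvPolynomial.induction_on with
  | C a => simpa using contDiff_const
  | add p q hp hq => simpa using hp.add hq
  | mul_X p i hp =>
    simp only [map_mul, MvPolynomial.eval_X]
    exact hp.mul (by fun_prop)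

lemma homog_bound {n : ℕ} (N D : (Fin n → ℝ) → ℝ) (hN : Continuous N) (hD : Continuous D)
    (hN2 : ∀ t c, N (t • c) = t ^ 2 * N c) (hD2 : ∀ t c, D (t • c) = t ^ 2 * D c)
    (hpos : ∀ c, c ≠ 0 → 0 < D c) : ∃ M : ℝ, 0 < M ∧ ∀ c, N c ≤ M * D c := by
  have hc : ContinuousOn (fun c => N c / D c) (Metric.sphere (0 : Fin n → ℝ) 1) := by
    apply hN.continuousOn.div hD.continuousOn
    intro x hx
    exact (hpos x (by rintro rfl; simp at hx)).ne'
  obtain ⟨M, hM⟩ := (isCompact_sphere (0 : Fin n → ℝ) 1).bddAbove_image hc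
  refine ⟨max M 1, by positivity, fun c => ?_⟩
  by_cases h0 : c = 0
  · subst h0
    have h1 := hN2 0 0
    have h2 := hD2 0 0
    simp at h1 h2
    simp [h1, h2]
  have hn : 0 < ‖c‖ := norm_pos_iff.2 h0
  set d := ‖c‖⁻¹ • c with hd
  have hdn : ‖d‖ = 1 := by rw [hd, norm_smul, norm_inv, norm_norm, inv_mul_cancel₀ hn.ne']
  have hcd : c = ‖c‖ • d := by rw [hd, smul_smul, mul_inv_cancel₀ hn.ne', one_smul]
  have h1 : N d / D d ≤ M := hM ⟨d, by simpa using hdn, rfl⟩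
  have hDd : 0 < D d := hpos d (by intro h; rw [h] at hdn; simp at hdn)
  have h2 : N d ≤ max M 1 * D d := by
    rw [div_le_iff₀ hDd] at h1
    exact h1.trans (by gcongr; exact le_max_left _ _)
  rw [hcd, hN2, hD2]
  nlinarith [sq_nonneg ‖c‖]

/-- vertices of the reference triangle -/
noncomputable def refv : Fin 3 → E2 := ![0, EuclideanSpace.single 0 1, EuclideanSpace.single 1 1]

/-- reference triangle -/
noncomputable def refT : Set E2 := convexHull ℝ (Set.range refv)

lemma refT_compact : IsCompact refT := (Set.finite_range refv).isCompact_convexHull (𝕜 := ℝ)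

lemma mem_refT (x : E2) (h0 : 0 ≤ x 0) (h1 : 0 ≤ x 1) (h : x 0 + x 1 ≤ 1) : x ∈ refT := by
  have hx : x = ∑ i, (![1 - x 0 - x 1, x 0, x 1] : Fin 3 → ℝ) i • refv i := by
    ext j
    fin_cases j <;> simp [Fin.sum_univ_three, refv]
  rw [hx]
  refine (convex_convexHull ℝ _).sum_mem ?_ ?_ ?_
  · intro i _
    fin_cases i <;> simp <;> linarith
  · simp [Fin.sum_univ_three]; ring
  · intro i _
    exact subset_convexHull ℝ _ ⟨i, rfl⟩

lemma ev_pos (q : MvPolynomial (Fin 2) ℝ) (hq : q ≠ 0) : 0 < ∫ x in refT, ev q x ^ 2 := by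
  have hnn : 0 ≤ ∫ x in refT, ev q x ^ 2 := integral_nonneg fun x => sq_nonneg _
  refine lt_of_le_of_ne hnn fun h => hq ?_
  have hcont : Continuous fun x => ev q x ^ 2 := ((ev_contDiff q).continuous).pow 2
  have hint : IntegrableOn (fun x => ev q x ^ 2) refT := hcont.continuousOn.integrableOn_compact refT_compact
  have hae := (integral_eq_zero_iff_of_nonneg (fun x => sq_nonneg _) hint).1 h.symm
  let U : Set E2 := {x | 0 < x 0 ∧ x 0 < 1/2 ∧ 0 < x 1 ∧ x 1 < 1/2}
  have hU : IsOpen U := by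
    have h0 : Continuous fun x : E2 => x 0 := by fun_prop
    have h1 : Continuous fun x : E2 => x 1 := by fun_prop
    exact (isOpen_lt continuous_const h0).inter ((isOpen_lt h0 continuous_const).inter
      ((isOpen_lt continuous_const h1).inter (isOpen_lt h1 continuous_const)))
  have hUT : U ⊆ refT := fun x hx => mem_refT x hx.1.le hx.2.2.1.le (by linarith [hx.2.1, hx.2.2.2])
  have hae2 := ae_restrict_of_ae_restrict_of_subset hUT hae
  have heq : Set.EqOn (fun x => ev q x ^ 2) 0 U :=
    Measure.eqOn_open_of_ae_eq hae2 hU hcont.continuousOn continuousOn_const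
  apply MvPolynomial.funext_set (fun _ => Set.Ioo (0:ℝ) (1/2)) (fun _ => Set.Ioo_infinite (by norm_num))
  intro x hx
  have := heq (x := WithLp.toLp 2 x) ⟨(hx 0 trivial).1, (hx 0 trivial).2, (hx 1 trivial).1, (hx 1 trivial).2⟩
  simpa [ev] using this

lemma ref_bound (B : MvPolynomial (Fin 2) ℝ) (k : ℕ) : ∃ M : ℝ, 0 < M ∧
    ∀ q : MvPolynomial (Fin 2) ℝ, q.totalDegree ≤ k →
      ∫ x in refT, ‖fderiv ℝ (ev (B * q)) x‖ ^ 2 ≤ M * ∫ x in refT, ev q x ^ 2 := by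
  let V := MvPolynomial.restrictTotalDegree (Fin 2) ℝ k
  let b := Module.finBasis ℝ V
  let P : (Fin (Module.finrank ℝ V) → ℝ) → MvPolynomial (Fin 2) ℝ := fun c => ∑ i, c i • (b i : MvPolynomial (Fin 2) ℝ)
  have hP : ∀ c, P c = ((b.equivFun.symm c : V) : MvPolynomial (Fin 2) ℝ) := by
    intro c; simp [P, Module.Basis.equivFun_symm_apply]
  have hPs : ∀ (t : ℝ) c, P (t • c) = t • P c := by
    intro t c; simp [P, Finset.smul_sum, smul_smul]
  have hevs : ∀ (t : ℝ) q, ev (t • q) = t • ev q := by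
    intro t q; ext x; simp [ev, MvPolynomial.smul_eval]
  have hev : ∀ c x, ev (P c) x = ∑ i, c i * ev (b i) x := by
    intro c x; simp [P, ev, MvPolynomial.smul_eval]
  have hdiff : ∀ q x, DifferentiableAt ℝ (ev q) x := fun q x => (ev_contDiff q).differentiable (by norm_num) x
  have hfd : ∀ c x, fderiv ℝ (ev (B * P c)) x = ∑ i, c i • fderiv ℝ (ev (B * b i)) x := by
    intro c x
    have : ev (B * P c) = fun y => ∑ i, c i • ev (B * b i) y := by
      ext y; simp [P, ev, MvPolynomial.smul_eval, Finset.mul_sum]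
    rw [this, fderiv_fun_sum (A := fun i y => c i • ev (B * b i) y)
      (fun i _ => (hdiff _ x).const_smul (c i))]
    apply Finset.sum_congr rfl
    intro i _
    exact fderiv_const_smul (hdiff _ x) (c i)
  have key : ∃ M : ℝ, 0 < M ∧ ∀ c, (fun c => ∫ x in refT, ‖fderiv ℝ (ev (B * P c)) x‖ ^ 2) c
      ≤ M * (fun c => ∫ x in refT, ev (P c) x ^ 2) c := by
    refine homog_bound _ _ ?_ ?_ ?_ ?_ ?_
    · refine continuous_parametric_integral_of_continuous ?_ refT_compact
      simp only [hfd]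
      have : ∀ i, Continuous (fderiv ℝ (ev (B * b i))) := fun i => (ev_contDiff _).continuous_fderiv (by norm_num)
      simp only [Function.uncurry_def]
      fun_prop
    · refine continuous_parametric_integral_of_continuous ?_ refT_compact
      simp only [hev]
      have : ∀ i, Continuous (ev (b i)) := fun i => (ev_contDiff _).continuous
      simp only [Function.uncurry_def]
      fun_prop
    · intro t c
      rw [← integral_const_mul]
      congr 1; ext x
      rw [hPs, mul_smul_comm, hevs, fderiv_const_smul (hdiff _ x), norm_smul, mul_pow]
      simp
    · intro t c
      rw [← integral_const_mul]
      congr 1; ext x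
      rw [hPs, hevs]; simp [mul_pow]
    · intro c hc
      apply ev_pos
      rw [hP, Ne, Submodule.coe_eq_zero, LinearEquiv.map_eq_zero_iff]
      exact hc
  obtain ⟨M, hM0, hM⟩ := key
  refine ⟨M, hM0, fun q hq => ?_⟩
  have := hM (b.equivFun ⟨q, (MvPolynomial.mem_restrictTotalDegree _ _ _).2 hq⟩)
  simpa [hP] using this

lemma totalDegree_aeval_le (g : Fin 2 → MvPolynomial (Fin 2) ℝ) (hg : ∀ i, (g i).totalDegree ≤ 1)
    (p : MvPolynomial (Fin 2) ℝ) (k : ℕ) (hp : p.totalDegree ≤ k) :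
    (MvPolynomial.aeval g p).totalDegree ≤ k := by
  rw [p.as_sum, map_sum]
  apply MvPolynomial.totalDegree_finsetSum_le
  intro d hd
  rw [MvPolynomial.aeval_monomial]
  refine (MvPolynomial.totalDegree_mul _ _).trans ?_
  have h1 := MvPolynomial.le_totalDegree hd
  have h2 : (algebraMap ℝ (MvPolynomial (Fin 2) ℝ) (MvPolynomial.coeff d p)).totalDegree = 0 :=
    MvPolynomial.totalDegree_C _
  rw [h2, zero_add]
  refine le_trans ?_ (h1.trans hp)
  refine (MvPolynomial.totalDegree_finsetProd _ _).trans ?_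
  refine Finset.sum_le_sum fun i _ => ?_
  refine (MvPolynomial.totalDegree_pow _ _).trans ?_
  nlinarith [hg i]

/-- linear part of the affine map from the reference triangle -/
noncomputable def linA (u w : E2) : E2 →L[ℝ] E2 :=
  (EuclideanSpace.proj (𝕜 := ℝ) (0 : Fin 2)).smulRight u
    + (EuclideanSpace.proj (𝕜 := ℝ) (1 : Fin 2)).smulRight w

lemma linA_apply (u w x : E2) : linA u w x = x 0 • u + x 1 • w := by
  simp [linA]

lemma linA_det (u w : E2) : (linA u w).det = u 0 * w 1 - u 1 * w 0 := by
  rw [ContinuousLinearMap.det, ← LinearMap.det_toMatrix (EuclideanSpace.basisFun (Fin 2) ℝ).toBasis,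
    Matrix.det_fin_two]
  simp [LinearMap.toMatrix_apply, linA_apply]
  ring

lemma coord_le (y : E2) (i : Fin 2) : |y i| ≤ ‖y‖ := by
  simpa using PiLp.norm_apply_le y i

lemma linA_solve (u w : E2) (h : ℝ) (hu : ‖u‖ ≤ h) (hw : ‖w‖ ≤ h) (hd : (linA u w).det ≠ 0) (y : E2) :
    ∃ z, linA u w z = y ∧ ‖z‖ ≤ 4 * h / |(linA u w).det| * ‖y‖ := by
  set d := (linA u w).det with hdd
  have hdet : d = u 0 * w 1 - u 1 * w 0 := linA_det u w
  let z0 : E2 := !₂[w 1 * y 0 - w 0 * y 1, u 0 * y 1 - u 1 * y 0]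
  refine ⟨d⁻¹ • z0, ?_, ?_⟩
  · rw [map_smul, inv_smul_eq_iff₀ hd, linA_apply, hdet]
    ext j
    fin_cases j <;> simp [z0] <;> ring
  · have key : ∀ (s t : ℝ), |s| ≤ h → |t| ≤ h → |s * y 0 - t * y 1| ≤ 2 * h * ‖y‖ := by
      intro s t hs ht
      have hh : 0 ≤ h := (abs_nonneg _).trans hs
      calc |s * y 0 - t * y 1| ≤ |s * y 0| + |t * y 1| := abs_sub _ _
        _ = |s| * |y 0| + |t| * |y 1| := by rw [abs_mul, abs_mul]
        _ ≤ h * ‖y‖ + h * ‖y‖ := by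
          gcongr
          · exact coord_le y 0
          · exact coord_le y 1
        _ = _ := by ring
    have k0 : |z0 0| ≤ 2 * h * ‖y‖ := by
      simpa [z0] using key (w 1) (w 0) ((coord_le w 1).trans hw) ((coord_le w 0).trans hw)
    have k1 : |z0 1| ≤ 2 * h * ‖y‖ := by
      have := key (u 1) (u 0) ((coord_le u 1).trans hu) ((coord_le u 0).trans hu)
      rw [abs_sub_comm] at this
      simpa [z0] using this
    have hz : ‖z0‖ ≤ 4 * h * ‖y‖ := by
      have hp : 0 ≤ 2 * h * ‖y‖ := (abs_nonneg _).trans k0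
      rw [EuclideanSpace.norm_eq, Fin.sum_univ_two]
      apply Real.sqrt_le_iff.2
      refine ⟨by linarith, ?_⟩
      have e0 : ‖z0 0‖ ^ 2 ≤ (2 * h * ‖y‖) ^ 2 := by
        rw [Real.norm_eq_abs]; gcongr
      have e1 : ‖z0 1‖ ^ 2 ≤ (2 * h * ‖y‖) ^ 2 := by
        rw [Real.norm_eq_abs]; gcongr
      nlinarith [sq_nonneg (h * ‖y‖)]
    rw [norm_smul, norm_inv, Real.norm_eq_abs, div_mul_eq_mul_div, div_eq_inv_mul]
    gcongr

end BubbleAux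

open BubbleAux in
theorem element_bubble_inverse_estimate (k : ℕ) (σ : ℝ) (hσ : 0 < σ) :
    ∃ C : ℝ, 0 < C ∧
      ∀ (a : Fin 3 → EuclideanSpace ℝ (Fin 2)), AffineIndependent ℝ a →
      letI τ : Set (EuclideanSpace ℝ (Fin 2)) := convexHull ℝ (Set.range a)
      Metric.diam τ ^ 2 ≤ σ * (volume τ).toReal →
      ∀ (L : Fin 3 → (EuclideanSpace ℝ (Fin 2) →ᵃ[ℝ] ℝ)),
        (∀ i j, L i (a j) = if i = j then 1 else 0) →
      ∀ (p : MvPolynomial (Fin 2) ℝ), p.totalDegree ≤ k →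
        letI ψ : EuclideanSpace ℝ (Fin 2) → ℝ := fun x => 27 * L 0 x * L 1 x * L 2 x
        letI v : EuclideanSpace ℝ (Fin 2) → ℝ := fun x => MvPolynomial.eval (fun i => x i) p
        (∫ x in τ, ‖fderiv ℝ (fun y => ψ y * v y) x‖ ^ 2) ≤
          C * (Metric.diam τ ^ 2)⁻¹ * ∫ x in τ, v x ^ 2 := by
  let B : MvPolynomial (Fin 2) ℝ := MvPolynomial.C 27 * (1 - MvPolynomial.X 0 - MvPolynomial.X 1)
    * MvPolynomial.X 0 * MvPolynomial.X 1
  obtain ⟨M, hM0, hM⟩ := ref_bound B k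
  set m := (volume refT).toReal with hm
  have hm0 : 0 ≤ m := ENNReal.toReal_nonneg
  refine ⟨(4 * σ * m) ^ 2 * M + 1, by positivity, ?_⟩
  intro a ha hsh L hL p hp
  simp only at hsh ⊢
  set τ : Set E2 := convexHull ℝ (Set.range a) with hτ
  set h := Metric.diam τ with hh
  set A := linA (a 1 - a 0) (a 2 - a 0) with hA
  let F : E2 → E2 := fun x => a 0 + A x
  have hFτ : F '' refT = τ := by
    have h1 : F '' refT = (fun x => a 0 + x) '' (A '' refT) := by
      rw [Set.image_image]
    let G : E2 →ᵃ[ℝ] E2 := A.toLinearMap.toAffineMap + AffineMap.const ℝ E2 (a 0)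
    have hG : F = G := by ext1 x; simp [F, G, add_comm]
    rw [hG, refT, AffineMap.image_convexHull, ← Set.range_comp, hτ]
    congr 2
    ext1 i
    rw [← hG]
    fin_cases i <;> simp [F, hA, linA_apply, refv]
  have hFd : ∀ x, HasFDerivAt F A x := fun x => A.hasFDerivAt.const_add (a 0)
  have hbdd : Bornology.IsBounded τ := ((Set.finite_range a).isCompact_convexHull (𝕜 := ℝ)).isBounded
  have haτ : ∀ i, a i ∈ τ := fun i => subset_convexHull ℝ _ ⟨i, rfl⟩
  have hdist : ∀ i j, ‖a i - a j‖ ≤ h := by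
    intro i j
    rw [← dist_eq_norm]
    exact Metric.dist_le_diam_of_mem hbdd (haτ i) (haτ j)
  have hhpos : 0 < h := by
    refine lt_of_lt_of_le ?_ (hdist 1 0)
    rw [norm_pos_iff, sub_ne_zero]
    exact fun e => absurd (ha.injective e) (by decide)
  have hTm : MeasurableSet refT := refT_compact.measurableSet
  have hTfin : volume refT ≠ ⊤ := refT_compact.measure_lt_top.ne
  have hvol : (volume τ).toReal ≤ |A.det| * m := by
    have h1 := addHaar_image_le_lintegral_abs_det_fderiv volume hTm
      (fun x _ => (hFd x).hasFDerivWithinAt (s := refT))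
    rw [hFτ, setLIntegral_const] at h1
    have h2 := ENNReal.toReal_mono (by finiteness) h1
    rwa [ENNReal.toReal_mul, ENNReal.toReal_ofReal (abs_nonneg _)] at h2
  have hdet : h ^ 2 ≤ σ * m * |A.det| := by
    refine hsh.trans ?_
    rw [mul_assoc, mul_comm m]
    gcongr
  have hd0 : A.det ≠ 0 := by
    intro h0
    rw [h0] at hdet
    simp at hdet
    exact hhpos.ne' hdet
  have hdpos : 0 < |A.det| := abs_pos.2 hd0
  set K := 4 * σ * m / h with hK
  have hK0 : 0 ≤ K := by positivity
  have hKle : 4 * h / |A.det| ≤ K := by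
    rw [hK, div_le_div_iff₀ hdpos hhpos]
    nlinarith
  have hsolve : ∀ y, ∃ z, A z = y ∧ ‖z‖ ≤ K * ‖y‖ := by
    intro y
    obtain ⟨z, hz1, hz2⟩ := linA_solve _ _ h (hdist 1 0) (hdist 2 0) hd0 y
    exact ⟨z, hz1, hz2.trans (by gcongr)⟩
  have hAsurj : Function.Surjective A := fun y => (hsolve y).imp fun z hz => hz.1
  have hAinj : Function.Injective A := by
    have := LinearMap.injective_iff_surjective (f := A.toLinearMap)
    exact this.2 hAsurj
  have hFinj : Set.InjOn F refT := fun x _ y _ e => hAinj (add_left_cancel e)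
  have hcv : ∀ g : E2 → ℝ, ∫ x in τ, g x = |A.det| * ∫ x in refT, g (F x) := by
    intro g
    rw [← hFτ, integral_image_eq_integral_abs_det_fderiv_smul volume hTm
      (fun x _ => (hFd x).hasFDerivWithinAt) hFinj, ← integral_const_mul]
    rfl
  -- pulled back polynomial
  let g : Fin 2 → MvPolynomial (Fin 2) ℝ := fun i =>
    MvPolynomial.C (a 0 i) + (MvPolynomial.C ((a 1 - a 0) i) * MvPolynomial.X 0
      + MvPolynomial.C ((a 2 - a 0) i) * MvPolynomial.X 1)
  have hlin : ∀ (c : ℝ) (j : Fin 2),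
      (MvPolynomial.C c * MvPolynomial.X j : MvPolynomial (Fin 2) ℝ).totalDegree ≤ 1 := by
    intro c j
    refine (MvPolynomial.totalDegree_mul _ _).trans ?_
    simp
  have hg : ∀ i, (g i).totalDegree ≤ 1 := by
    intro i
    refine (MvPolynomial.totalDegree_add _ _).trans (max_le (by simp) ?_)
    exact (MvPolynomial.totalDegree_add _ _).trans (max_le (hlin _ _) (hlin _ _))
  let q := MvPolynomial.aeval g p
  have hq : q.totalDegree ≤ k := totalDegree_aeval_le g hg p k hp
  have hqv : ∀ x, ev q x = ev p (F x) := by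
    intro x
    have e : ∀ i, MvPolynomial.eval (fun i => x i) (g i) = F x i := by
      intro i
      simp [g, F, hA, linA_apply]
      ring
    simp only [ev, q, ← e]
    clear * -
    induction p using MvPolynomial.induction_on with
    | C c => simp
    | add p q hp hq => simp only [map_add, hp, hq]
    | mul_X p i hp => simp only [map_mul, hp, MvPolynomial.aeval_X, MvPolynomial.eval_X]
  have hLF : ∀ i x, L i (F x) = L i (a 0) + x 0 * (L i (a 1) - L i (a 0)) + x 1 * (L i (a 2) - L i (a 0)) := by
    intro i x
    have e : F x = (x 0 • (a 1 - a 0) + x 1 • (a 2 - a 0)) +ᵥ a 0 := by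
      simp [F, hA, linA_apply, add_comm]
    rw [e, AffineMap.map_vadd, map_add, map_smul, map_smul, ← vsub_eq_sub, ← vsub_eq_sub,
      AffineMap.linearMap_vsub, AffineMap.linearMap_vsub]
    simp
    ring
  set f : E2 → ℝ := fun y => 27 * L 0 y * L 1 y * L 2 y * ev p y with hf
  have hfF : ∀ x, ev (B * q) x = f (F x) := by
    intro x
    have : ev (B * q) x = ev B x * ev q x := by simp [ev]
    rw [this, hqv, hf]
    simp only [hLF, hL]
    simp [ev, B]
    refine Or.inl (Or.inl (Or.inl ?_))
    ring
  have hfdiff : Differentiable ℝ f := by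
    have h1 : ∀ i, Differentiable ℝ (L i) := fun i =>
      (⟨L i, (L i).continuous_of_finiteDimensional⟩ : E2 →ᴬ[ℝ] ℝ).differentiable
    have h2 : Differentiable ℝ (ev p) := (ev_contDiff p).differentiable (by norm_num)
    exact ((((h1 0).const_mul 27).mul (h1 1)).mul (h1 2)).mul h2
  have hpt : ∀ x, ‖fderiv ℝ f (F x)‖ ≤ K * ‖fderiv ℝ (ev (B * q)) x‖ := by
    intro x
    have e : fderiv ℝ (ev (B * q)) x = (fderiv ℝ f (F x)).comp A := by
      have : ev (B * q) = f ∘ F := funext hfF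
      rw [this]
      exact ((hfdiff (F x)).hasFDerivAt.comp x (hFd x)).fderiv
    refine ContinuousLinearMap.opNorm_le_bound _ (by positivity) fun y => ?_
    obtain ⟨z, hz, hzn⟩ := hsolve y
    have e2 : fderiv ℝ f (F x) y = fderiv ℝ (ev (B * q)) x z := by rw [e, ← hz]; rfl
    rw [e2]
    calc _ ≤ ‖fderiv ℝ (ev (B * q)) x‖ * ‖z‖ := ContinuousLinearMap.le_opNorm _ _
      _ ≤ ‖fderiv ℝ (ev (B * q)) x‖ * (K * ‖y‖) := by gcongr
      _ = _ := by ring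
  change ∫ x in τ, ‖fderiv ℝ f x‖ ^ 2 ≤ _ * ∫ x in τ, ev p x ^ 2
  have hcd := (ev_contDiff (B * q)).continuous_fderiv (by norm_num)
  have hI : IntegrableOn (fun x => K ^ 2 * ‖fderiv ℝ (ev (B * q)) x‖ ^ 2) refT := by
    apply ContinuousOn.integrableOn_compact refT_compact
    fun_prop
  have step : ∫ x in refT, ‖fderiv ℝ f (F x)‖ ^ 2 ≤ K ^ 2 * (M * ∫ x in refT, ev q x ^ 2) := by
    calc _ ≤ ∫ x in refT, K ^ 2 * ‖fderiv ℝ (ev (B * q)) x‖ ^ 2 := by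
          apply integral_mono_of_nonneg (Filter.Eventually.of_forall fun x => by positivity) hI
          refine Filter.Eventually.of_forall fun x => ?_
          simp only
          rw [← mul_pow]
          gcongr
          exact hpt x
      _ = K ^ 2 * ∫ x in refT, ‖fderiv ℝ (ev (B * q)) x‖ ^ 2 := integral_const_mul _ _
      _ ≤ _ := by gcongr; exact hM q hq
  have hnn : 0 ≤ ∫ x in refT, ev q x ^ 2 := integral_nonneg fun x => sq_nonneg _
  rw [hcv, hcv]
  simp only [← hqv]
  have hK2 : K ^ 2 * M ≤ ((4 * σ * m) ^ 2 * M + 1) * (h ^ 2)⁻¹ := by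
    rw [hK, div_pow, div_eq_mul_inv]
    have : 0 ≤ (h ^ 2)⁻¹ := by positivity
    linarith
  calc _ ≤ |A.det| * (K ^ 2 * (M * ∫ x in refT, ev q x ^ 2)) := by gcongr
    _ = (K ^ 2 * M) * (|A.det| * ∫ x in refT, ev q x ^ 2) := by ring
    _ ≤ _ := by gcongr
end

section
/- For every natural number k and every σ > 0 there exist constants c > 0 and C > 0, depending only on k and σ, with the following property: let τ ⊂ ℝ² be a nondegenerate triangle with vertices a₁, a₂, a₃ satisfying h_τ² ≤ σ·|τ|, let e = [a₁, a₂] be an edge of τ of length h_e, and let ψ_e = 4·λ₁·λ₂ be the edge bubble function of e (λ₁, λ₂ the barycentric coordinates associated with a₁, a₂). Then for every polynomial function φ of degree at most k on e (that is, φ = q ∘ γ⁻¹ for the affine parametrization γ of e and a univariate polynomial q of degree ≤ k) there exists a polynomial function w : ℝ² → ℝ of total degree at most k + 2 such that w agrees with ψ_e·φ on e, w vanishes on the two edges [a₁,a₃] and [a₂,a₃], and c·h_e^{1/2}·‖φ‖_{0,e} ≤ ‖w‖_{0,τ} ≤ C·h_e^{1/2}·‖φ‖_{0,e}, where ‖·‖_{0,e}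 is the L² norm on e with respect to one-dimensional Hausdorff measure and ‖·‖_{0,τ} is the L² norm on τ with respect to Lebesgue measure. -/
open MeasureTheory
abbrev E2 := EuclideanSpace ℝ (Fin 2)

lemma setInt_sq_pos {X : Type*} [TopologicalSpace X] [T2Space X] [MeasurableSpace X] [BorelSpace X]
    (μ : Measure X) [IsFiniteMeasureOnCompacts μ] [μ.IsOpenPosMeasure] {s : Set X}
    (hs : IsCompact s) {f : X → ℝ} (hf : Continuous f) {x : X} (hx : x ∈ interior s)
    (hfx : f x ≠ 0) : 0 < ∫ y in s, f y ^ 2 ∂μ := by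
  have hi : IntegrableOn (fun y => f y ^ 2) s μ := (hf.pow 2).continuousOn.integrableOn_compact hs
  rw [setIntegral_pos_iff_support_of_nonneg_ae (Filter.Eventually.of_forall fun y => sq_nonneg _) hi]
  have ho : IsOpen ({y | f y ≠ 0} ∩ interior s) :=
    (isOpen_ne_fun hf continuous_const).inter isOpen_interior
  refine lt_of_lt_of_le (ho.measure_pos μ ⟨x, hfx, hx⟩) (measure_mono ?_)
  rintro y ⟨h1, h2⟩
  exact ⟨by simpa using h1, interior_subset h2⟩

lemma quad_compare {n : ℕ} (A B : (Fin (n+1) → ℝ) → ℝ) (hA : Continuous A) (hB : Continuous B)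
    (hA2 : ∀ (t : ℝ) c, A (t • c) = t ^ 2 * A c) (hB2 : ∀ (t : ℝ) c, B (t • c) = t ^ 2 * B c)
    (hA0 : ∀ c, c ≠ 0 → 0 < A c) (hB0 : ∀ c, c ≠ 0 → 0 < B c) :
    ∃ m : ℝ, 0 < m ∧ ∀ c, m * B c ≤ A c := by
  have hK := isCompact_sphere (0 : Fin (n+1) → ℝ) 1
  have hne : (Metric.sphere (0 : Fin (n+1) → ℝ) 1).Nonempty :=
    NormedSpace.sphere_nonempty.mpr zero_le_one
  have nz : ∀ c ∈ Metric.sphere (0 : Fin (n+1) → ℝ) 1, c ≠ 0 := by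
    rintro c hc rfl
    simp at hc
  obtain ⟨c0, h0, hm⟩ := hK.exists_isMinOn hne (f := fun c => A c / B c)
    (hA.continuousOn.div hB.continuousOn fun c hc => (hB0 c (nz c hc)).ne')
  refine ⟨A c0 / B c0, div_pos (hA0 _ (nz _ h0)) (hB0 _ (nz _ h0)), fun c => ?_⟩
  by_cases hc : c = 0
  · subst hc
    have h1 := hA2 0 0
    have h2 := hB2 0 0
    simp at h1 h2
    simp [h1, h2]
  · have hn : ‖c‖ ≠ 0 := norm_ne_zero_iff.mpr hc
    have hs : ‖c‖⁻¹ • c ∈ Metric.sphere (0 : Fin (n+1) → ℝ) 1 := by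
      simp [norm_smul, hn]
    have h := hm hs
    simp only [Set.mem_ofPred_eq] at h
    rw [hA2, hB2, mul_div_mul_left _ _ (by positivity), le_div_iff₀ (hB0 c hc)] at h
    exact h

lemma poly_ne {n : ℕ} (c : Fin (n+1) → ℝ) (hc : c ≠ 0) :
    ∃ t ∈ Set.Ioo (0:ℝ) 1, ∑ i, c i * t ^ (i : ℕ) ≠ 0 := by
  by_contra! h
  apply hc
  set p : Polynomial ℝ := ∑ i : Fin (n+1), Polynomial.C (c i) * Polynomial.X ^ (i : ℕ) with hp
  have hp0 : p = 0 := by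
    apply Polynomial.eq_zero_of_infinite_isRoot
    refine (Set.Ioo_infinite (zero_lt_one (α := ℝ))).mono fun t ht => ?_
    have := h t ht
    simp [hp, Polynomial.eval_finsetSum, this]
  ext j
  have := congrArg (fun p => Polynomial.coeff p (j : ℕ)) hp0
  simpa [hp, Polynomial.finsetSum_coeff, Polynomial.coeff_C_mul, Polynomial.coeff_X_pow, Fin.val_inj] using this

/-- reference triangle -/
def refT : Set E2 := {x | 0 ≤ x 0 ∧ 0 ≤ x 1 ∧ x 0 + x 1 ≤ 1}

lemma refT_closed : IsClosed refT := by
  have h0 : IsClosed {x : E2 | 0 ≤ x 0} := isClosed_le (by fun_prop) (by fun_prop)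
  have h1 : IsClosed {x : E2 | 0 ≤ x 1} := isClosed_le (by fun_prop) (by fun_prop)
  have h2 : IsClosed {x : E2 | x 0 + x 1 ≤ 1} := isClosed_le (by fun_prop) (by fun_prop)
  exact h0.inter (h1.inter h2)

lemma refT_compact : IsCompact refT := by
  refine Metric.isCompact_of_isClosed_isBounded refT_closed ?_
  refine (Metric.isBounded_closedBall (x := (0:E2)) (r := 2)).subset ?_
  rintro x ⟨h0, h1, h2⟩
  rw [mem_closedBall_zero_iff, EuclideanSpace.norm_eq, Real.sqrt_le_left (by norm_num)]
  simp only [Fin.sum_univ_two, Real.norm_eq_abs, sq_abs]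
  nlinarith

lemma refT_interior {s t : ℝ} (hs : 0 < s) (ht : 0 < t) (hst : s + t < 1) :
    (!₂[s, t] : E2) ∈ interior refT := by
  refine mem_interior.mpr ⟨{x | 0 < x 0 ∧ 0 < x 1 ∧ x 0 + x 1 < 1}, ?_, ?_, ?_⟩
  · rintro x ⟨h0, h1, h2⟩
    exact ⟨h0.le, h1.le, h2.le⟩
  · have h0 : IsOpen {x : E2 | 0 < x 0} := isOpen_lt (by fun_prop) (by fun_prop)
    have h1 : IsOpen {x : E2 | 0 < x 1} := isOpen_lt (by fun_prop) (by fun_prop)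
    have h2 : IsOpen {x : E2 | x 0 + x 1 < 1} := isOpen_lt (by fun_prop) (by fun_prop)
    exact h0.inter (h1.inter h2)
  · simp [hs, ht, hst]

lemma refT_vol : 0 < (volume refT).toReal := by
  refine ENNReal.toReal_pos ?_ refT_compact.measure_lt_top.ne
  have := isOpen_interior.measure_pos volume ⟨_, refT_interior (s := 1/4) (t := 1/4) (by norm_num) (by norm_num) (by norm_num)⟩
  exact (this.trans_le (measure_mono interior_subset)).ne'

noncomputable def formA (n : ℕ) (c : Fin (n+1) → ℝ) : ℝ :=
  ∫ x in refT, (4 * x 0 * x 1 * ∑ i, c i * x 1 ^ (i : ℕ)) ^ 2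
noncomputable def formB (n : ℕ) (c : Fin (n+1) → ℝ) : ℝ :=
  ∫ t in Set.Icc (0:ℝ) 1, (∑ i, c i * t ^ (i : ℕ)) ^ 2

lemma formA_cont (n : ℕ) : Continuous (formA n) := by
  refine continuous_parametric_integral_of_continuous (f := fun (c : Fin (n+1) → ℝ) (x : E2) => (4 * x 0 * x 1 * ∑ i, c i * x 1 ^ (i : ℕ)) ^ 2) ?_ refT_compact
  unfold Function.uncurry; fun_prop
lemma formB_cont (n : ℕ) : Continuous (formB n) := by
  refine continuous_parametric_integral_of_continuous (f := fun (c : Fin (n+1) → ℝ) (t : ℝ) => (∑ i, c i * t ^ (i : ℕ)) ^ 2) ?_ isCompact_Icc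
  unfold Function.uncurry; fun_prop
lemma formA_smul (n : ℕ) (t : ℝ) (c) : formA n (t • c) = t ^ 2 * formA n c := by
  unfold formA
  rw [← integral_const_mul]
  congr 1; ext x
  simp only [Pi.smul_apply, smul_eq_mul, mul_assoc, ← Finset.mul_sum]; ring
lemma formB_smul (n : ℕ) (t : ℝ) (c) : formB n (t • c) = t ^ 2 * formB n c := by
  unfold formB
  rw [← integral_const_mul]
  congr 1; ext x
  simp only [Pi.smul_apply, smul_eq_mul, mul_assoc, ← Finset.mul_sum]; ring
lemma formA_pos (n : ℕ) (c) (hc : c ≠ 0) : 0 < formA n c := by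
  obtain ⟨t, ht, h⟩ := poly_ne c hc
  refine setInt_sq_pos volume refT_compact (by fun_prop)
    (refT_interior (s := (1-t)/2) (t := t) (by linarith [ht.2]) ht.1 (by linarith [ht.2])) ?_
  have h1 := ht.1
  have h2 : 1 - t ≠ 0 := by linarith [ht.2]
  simp [h, h1.ne', h2]
lemma formB_pos (n : ℕ) (c) (hc : c ≠ 0) : 0 < formB n c := by
  obtain ⟨t, ht, h⟩ := poly_ne c hc
  exact setInt_sq_pos volume isCompact_Icc (by fun_prop) (by simpa [interior_Icc] using ht) h

lemma seg_integral (x y : E2) (g : E2 → ℝ) (hg : Continuous g) :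
    ∫ z in segment ℝ x y, g z ∂(μH[1]) = dist x y * ∫ t in Set.Icc (0:ℝ) 1, g (AffineMap.lineMap x y t) := by
  have hγ : Continuous (AffineMap.lineMap x y : ℝ → E2) := AffineMap.lineMap_continuous
  have he : segment ℝ x y = AffineMap.lineMap x y '' Set.Icc (0:ℝ) 1 := segment_eq_image_lineMap ℝ x y
  have key : (μH[1] : Measure E2).restrict (segment ℝ x y) =
      Measure.map (AffineMap.lineMap x y : ℝ → E2) (nndist x y • (volume : Measure ℝ).restrict (Set.Icc 0 1)) := by
    ext s hs
    rw [Measure.restrict_apply hs, Measure.map_apply hγ.measurable hs, he, Set.inter_comm,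
      ← Set.image_inter_preimage, hausdorffMeasure_lineMap_image, Set.inter_comm, hausdorffMeasure_real]
    rw [Measure.smul_apply, Measure.restrict_apply (hγ.measurable hs)]
  rw [key, integral_map hγ.aemeasurable hg.aestronglyMeasurable, integral_smul_nnreal_measure]
  rfl

/-- reference map -/
noncomputable def refM (a : Fin 3 → E2) : E2 →ₗ[ℝ] E2 :=
  Matrix.toEuclideanLin !![a 0 0 - a 2 0, a 1 0 - a 2 0; a 0 1 - a 2 1, a 1 1 - a 2 1]

lemma refM_apply (a : Fin 3 → E2) (x : E2) : refM a x = x 0 • (a 0 - a 2) + x 1 • (a 1 - a 2) := by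
  ext i
  fin_cases i <;> simp [refM, Matrix.toLpLin_apply, dotProduct, Fin.sum_univ_two] <;> ring

lemma refM_det (a : Fin 3 → E2) : LinearMap.det (refM a) =
   (a 0 0 - a 2 0) * (a 1 1 - a 2 1) - (a 1 0 - a 2 0) * (a 0 1 - a 2 1) := by
  have : LinearMap.det (refM a) = Matrix.det !![a 0 0 - a 2 0, a 1 0 - a 2 0; a 0 1 - a 2 1, a 1 1 - a 2 1] := by
    rw [refM, Matrix.toEuclideanLin, Matrix.toLpLin_eq_toLin, LinearMap.det_toLin]
  rw [this, Matrix.det_fin_two_of]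

lemma refM_det_le (a : Fin 3 → E2) : |LinearMap.det (refM a)| ≤ dist (a 0) (a 1) * dist (a 1) (a 2) := by
  rw [refM_det, EuclideanSpace.dist_eq, EuclideanSpace.dist_eq, ← Real.sqrt_mul (by positivity)]
  apply Real.abs_le_sqrt
  simp only [Fin.sum_univ_two, Real.dist_eq, sq_abs]
  nlinarith [sq_nonneg ((a 0 0 - a 1 0) * (a 1 0 - a 2 0) + (a 0 1 - a 1 1) * (a 1 1 - a 2 1))]

lemma refM_image (a : Fin 3 → E2) : (fun x => a 2 + refM a x) '' refT = convexHull ℝ (Set.range a) := by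
  apply Set.Subset.antisymm
  · rintro _ ⟨x, ⟨h0, h1, h2⟩, rfl⟩
    have : a 2 + refM a x = ∑ i, (![x 0, x 1, 1 - x 0 - x 1] i) • a i := by
      rw [refM_apply, Fin.sum_univ_three]
      simp; module
    simp only [this]
    refine (convex_convexHull ℝ _).sum_mem ?_ ?_ ?_
    · intro i _; fin_cases i <;> simp <;> linarith
    · simp [Fin.sum_univ_three]
    · intro i _; exact subset_convexHull ℝ _ ⟨i, rfl⟩
  · have hc : Convex ℝ refT := by
      rintro x ⟨h0, h1, h2⟩ y ⟨k0, k1, k2⟩ s t hs ht hst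
      refine ⟨?_, ?_, ?_⟩ <;> simp
      · positivity
      · positivity
      · nlinarith
    refine convexHull_min ?_ ?_
    · rintro _ ⟨i, rfl⟩
      fin_cases i
      · exact ⟨!₂[1, 0], by simp [refT], by simp [refM_apply]⟩
      · exact ⟨!₂[0, 1], by simp [refT], by simp [refM_apply]⟩
      · exact ⟨0, by simp [refT], by simp⟩
    · have := (hc.linear_image (refM a)).translate (a 2)
      rwa [Set.image_image] at this

lemma bary_refM (a : Fin 3 → E2) (L : Fin 3 → (E2 →ᵃ[ℝ] ℝ))
    (i : Fin 3) (x : E2) :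
    L i (a 2 + refM a x) = x 0 * (L i (a 0) - L i (a 2)) + x 1 * (L i (a 1) - L i (a 2)) + L i (a 2) := by
  have h := (L i).map_vadd (a 2) (refM a x)
  have h0 := (L i).linearMap_vsub (a 0) (a 2)
  have h1 := (L i).linearMap_vsub (a 1) (a 2)
  simp only [vadd_eq_add, vsub_eq_sub] at h h0 h1
  rw [add_comm, h, refM_apply, map_add, map_smul, map_smul, h0, h1]
  simp

lemma tri_integral (a : Fin 3 → E2) (L : Fin 3 → (E2 →ᵃ[ℝ] ℝ))
    (hL : ∀ i j, L i (a j) = if i = j then 1 else 0) (g : E2 → ℝ) :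
    ∫ x in convexHull ℝ (Set.range a), g x = |LinearMap.det (refM a)| * ∫ x in refT, g (a 2 + refM a x) := by
  have hinj : Function.Injective (fun x => a 2 + refM a x) := by
    intro x y h
    have h0 := congrArg (L 0) h
    have h1 := congrArg (L 1) h
    simp only [bary_refM a L, hL] at h0 h1
    ext i
    fin_cases i
    · simpa using h0
    · simpa using h1
  have hd : ∀ x ∈ refT, HasFDerivWithinAt (fun x => a 2 + refM a x)
      (LinearMap.toContinuousLinearMap (refM a)) refT x := fun x _ =>
    ((LinearMap.toContinuousLinearMap (refM a)).hasFDerivAt.const_add (a 2)).hasFDerivWithinAt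
  rw [← refM_image, integral_image_eq_integral_abs_det_fderiv_smul
    (f' := fun _ => LinearMap.toContinuousLinearMap (refM a)) volume refT_closed.measurableSet
    hd hinj.injOn]
  simp only [smul_eq_mul, integral_const_mul]
  rfl

/-- an affine function as a polynomial -/
noncomputable def affP (l : E2 →ᵃ[ℝ] ℝ) : MvPolynomial (Fin 2) ℝ :=
  MvPolynomial.C (l 0) + MvPolynomial.C (l.linear !₂[1, 0]) * MvPolynomial.X 0
    + MvPolynomial.C (l.linear !₂[0, 1]) * MvPolynomial.X 1

lemma affP_eval (l : E2 →ᵃ[ℝ] ℝ) (x : E2) : MvPolynomial.eval (fun i => x i) (affP l) = l x := by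
  have h := l.map_vadd 0 x
  have hx : x = x 0 • (!₂[1, 0] : E2) + x 1 • (!₂[0, 1] : E2) := by
    ext i; fin_cases i <;> simp
  simp only [vadd_eq_add, add_zero] at h
  have h2 : l.linear x = x 0 * l.linear !₂[1, 0] + x 1 * l.linear !₂[0, 1] := by
    conv_lhs => rw [hx]
    rw [map_add, map_smul, map_smul]; simp
  rw [h, h2]
  simp [affP]; ring

lemma affP_deg (l : E2 →ᵃ[ℝ] ℝ) : (affP l).totalDegree ≤ 1 := by
  have h : ∀ (c : ℝ) (i : Fin 2), (MvPolynomial.C c * MvPolynomial.X i : MvPolynomial (Fin 2) ℝ).totalDegree ≤ 1 := by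
    intro c i
    refine (MvPolynomial.totalDegree_mul _ _).trans ?_
    simp
  refine (MvPolynomial.totalDegree_add _ _).trans (max_le ?_ (h _ _))
  refine (MvPolynomial.totalDegree_add _ _).trans (max_le ?_ (h _ _))
  simp

noncomputable def wpoly (l0 l1 : E2 →ᵃ[ℝ] ℝ) (q : Polynomial ℝ) : MvPolynomial (Fin 2) ℝ :=
  MvPolynomial.C 4 * affP l0 * affP l1 * Polynomial.aeval (affP l1) q

lemma wpoly_eval (l0 l1 : E2 →ᵃ[ℝ] ℝ) (q : Polynomial ℝ) (x : E2) :
    MvPolynomial.eval (fun i => x i) (wpoly l0 l1 q) = 4 * l0 x * l1 x * q.eval (l1 x) := by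
  have : MvPolynomial.eval (fun i => x i) (Polynomial.aeval (affP l1) q) = q.eval (l1 x) := by
    rw [Polynomial.aeval_eq_sum_range, Polynomial.eval_eq_sum_range, map_sum]
    simp [affP_eval, MvPolynomial.smul_eval]
  simp [wpoly, affP_eval, this]

lemma wpoly_deg (l0 l1 : E2 →ᵃ[ℝ] ℝ) (q : Polynomial ℝ) {k : ℕ} (hq : q.natDegree ≤ k) :
    (wpoly l0 l1 q).totalDegree ≤ k + 2 := by
  have h : (Polynomial.aeval (affP l1) q).totalDegree ≤ k := by
    rw [Polynomial.aeval_eq_sum_range]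
    refine MvPolynomial.totalDegree_finsetSum_le fun i hi => ?_
    refine (MvPolynomial.totalDegree_smul_le _ _).trans ((MvPolynomial.totalDegree_pow _ _).trans ?_)
    have := affP_deg l1
    have hi := Finset.mem_range.mp hi
    nlinarith
  have h1 := affP_deg l0
  have h2 := affP_deg l1
  have h3 := MvPolynomial.totalDegree_mul (MvPolynomial.C 4 * affP l0 * affP l1) (Polynomial.aeval (affP l1) q)
  have h4 := MvPolynomial.totalDegree_mul (MvPolynomial.C 4 * affP l0) (affP l1)
  have h5 := MvPolynomial.totalDegree_mul (MvPolynomial.C 4) (affP l0)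
  simp only [MvPolynomial.totalDegree_C] at h5
  unfold wpoly
  omega

lemma l_lineMap (l : E2 →ᵃ[ℝ] ℝ) (x y : E2) (t : ℝ) :
    l (AffineMap.lineMap x y t) = (1 - t) * l x + t * l y := by
  rw [AffineMap.apply_lineMap, AffineMap.lineMap_apply_module]; simp




/-- Extension-operator estimate (4.4): there are constants `c, C > 0` depending only on
the polynomial degree `k` and the shape-regularity constant `σ` such that for every
nondegenerate triangle `τ = convexHull {a 0, a 1, a 2} ⊂ ℝ²` with `h_τ² ≤ σ |τ|`,
barycentric coordinates `L 0, L 1, L 2`, edge `e = [a 0, a 1]` of length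
`h_e = dist (a 0) (a 1)` with edge bubble `ψ_e = 4 (L 0)(L 1)`, and every polynomial
function `φ` of degree at most `k` on `e` (i.e. `φ ∘ γ = q` on `[0,1]` for the affine
parametrization `γ = lineMap (a 0) (a 1)` and a univariate polynomial `q` of degree ≤ k),
there is a polynomial function `w` of total degree at most `k + 2` which agrees with
`ψ_e φ` on `e`, vanishes on the other two edges `[a 0, a 2]` and `[a 1, a 2]`, and
satisfies `c h_e^{1/2} ‖φ‖_{0,e} ≤ ‖w‖_{0,τ} ≤ C h_e^{1/2} ‖φ‖_{0,e}`, where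
`‖·‖_{0,e}` is taken with respect to the one-dimensional Hausdorff measure. -/
theorem edge_bubble_extension_estimate (k : ℕ) (σ : ℝ) (hσ : 0 < σ) :
    ∃ c : ℝ, 0 < c ∧ ∃ C : ℝ, 0 < C ∧
      ∀ (a : Fin 3 → EuclideanSpace ℝ (Fin 2)), AffineIndependent ℝ a →
      letI τ : Set (EuclideanSpace ℝ (Fin 2)) := convexHull ℝ (Set.range a)
      letI e : Set (EuclideanSpace ℝ (Fin 2)) := segment ℝ (a 0) (a 1)
      letI he : ℝ := dist (a 0) (a 1)
      Metric.diam τ ^ 2 ≤ σ * (volume τ).toReal →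
      ∀ (L : Fin 3 → (EuclideanSpace ℝ (Fin 2) →ᵃ[ℝ] ℝ)),
        (∀ i j, L i (a j) = if i = j then 1 else 0) →
      ∀ (φ : EuclideanSpace ℝ (Fin 2) → ℝ) (q : Polynomial ℝ), q.natDegree ≤ k →
        (∀ t ∈ Set.Icc (0 : ℝ) 1, φ (AffineMap.lineMap (a 0) (a 1) t) = q.eval t) →
        ∃ wp : MvPolynomial (Fin 2) ℝ, wp.totalDegree ≤ k + 2 ∧
          letI w : EuclideanSpace ℝ (Fin 2) → ℝ := fun x => MvPolynomial.eval (fun i => x i) wp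
          (∀ x ∈ e, w x = (4 * L 0 x * L 1 x) * φ x) ∧
          (∀ x ∈ segment ℝ (a 0) (a 2), w x = 0) ∧
          (∀ x ∈ segment ℝ (a 1) (a 2), w x = 0) ∧
          c * Real.sqrt he * Real.sqrt (∫ x in e, φ x ^ 2 ∂(μH[1])) ≤
            Real.sqrt (∫ x in τ, w x ^ 2) ∧
          Real.sqrt (∫ x in τ, w x ^ 2) ≤
            C * Real.sqrt he * Real.sqrt (∫ x in e, φ x ^ 2 ∂(μH[1])) := by
  obtain ⟨m, hm, hmAB⟩ := quad_compare (formA k) (formB k) (formA_cont k) (formB_cont k)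
    (formA_smul k) (formB_smul k) (formA_pos k) (formB_pos k)
  obtain ⟨M, hM, hMBA⟩ := quad_compare (formB k) (formA k) (formB_cont k) (formA_cont k)
    (formB_smul k) (formA_smul k) (formB_pos k) (formA_pos k)
  set V := (volume refT).toReal with hV
  have hV0 : 0 < V := refT_vol
  refine ⟨Real.sqrt (m / (σ * V)), by positivity, Real.sqrt (σ * V / M), by positivity, ?_⟩
  intro a ha hreg L hL φ q hq hφ
  refine ⟨wpoly (L 0) (L 1) q, wpoly_deg _ _ _ hq, ?_, ?_, ?_, ?_⟩
  · intro x hx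
    rw [segment_eq_image_lineMap] at hx
    obtain ⟨t, ht, rfl⟩ := hx
    beta_reduce
    rw [wpoly_eval, hφ t ht]
    congr 2
    rw [l_lineMap]; simp [hL]
  · intro x hx
    rw [segment_eq_image_lineMap] at hx
    obtain ⟨t, ht, rfl⟩ := hx
    beta_reduce
    rw [wpoly_eval, l_lineMap (L 1)]; simp [hL]
  · intro x hx
    rw [segment_eq_image_lineMap] at hx
    obtain ⟨t, ht, rfl⟩ := hx
    beta_reduce
    rw [wpoly_eval, l_lineMap (L 0)]; simp [hL]
  set c : Fin (k+1) → ℝ := fun i => q.coeff i with hc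
  have hqc : ∀ t, q.eval t = ∑ i, c i * t ^ (i : ℕ) := fun t => by
    rw [Polynomial.eval_eq_sum_range' (Nat.lt_succ_of_le hq), Finset.sum_range]
  have hB : ∫ x in segment ℝ (a 0) (a 1), φ x ^ 2 ∂(μH[1]) = dist (a 0) (a 1) * formB k c := by
    have hms : MeasurableSet (segment ℝ (a 0) (a 1)) := by
      rw [segment_eq_image_lineMap]
      exact (isCompact_Icc.image AffineMap.lineMap_continuous).isClosed.measurableSet
    have hcont : Continuous (L 1) := (L 1).continuous_of_finiteDimensional
    rw [setIntegral_congr_fun (g := fun x => q.eval (L 1 x) ^ 2) hms, seg_integral]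
    · congr 1
      unfold formB
      congr 1; ext t
      rw [← hqc, l_lineMap]; simp [hL]
    · exact (q.continuous.comp hcont).pow 2
    · intro x hx
      rw [segment_eq_image_lineMap] at hx
      obtain ⟨t, ht, rfl⟩ := hx
      simp only [hφ t ht]
      rw [l_lineMap]; simp [hL]
  set D := |LinearMap.det (refM a)| with hD
  have hA : ∫ x in convexHull ℝ (Set.range a),
      (MvPolynomial.eval (fun i => x i) (wpoly (L 0) (L 1) q)) ^ 2 = D * formA k c := by
    rw [tri_integral a L hL]
    congr 1
    unfold formA
    congr 1; ext x
    rw [wpoly_eval, bary_refM a L, bary_refM a L, ← hqc]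
    simp [hL]
  have hvol : (volume (convexHull ℝ (Set.range a))).toReal = D * V := by
    have := tri_integral a L hL (fun _ => 1)
    simpa [Measure.real] using this
  have hbd : Bornology.IsBounded (convexHull ℝ (Set.range a)) :=
    isBounded_convexHull.mpr (Set.finite_range a).isBounded
  have hmem : ∀ i, a i ∈ convexHull ℝ (Set.range a) := fun i => subset_convexHull ℝ _ ⟨i, rfl⟩
  set d := Metric.diam (convexHull ℝ (Set.range a)) with hd
  have h01 : dist (a 0) (a 1) ≤ d := Metric.dist_le_diam_of_mem hbd (hmem 0) (hmem 1)
  have h12 : dist (a 1) (a 2) ≤ d := Metric.dist_le_diam_of_mem hbd (hmem 1) (hmem 2)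
  have hdet := refM_det_le a
  rw [← hD] at hdet
  have he0 : 0 < dist (a 0) (a 1) := dist_pos.mpr (ha.injective.ne (by decide))
  rw [hvol] at hreg
  beta_reduce
  rw [hA, hB]
  set h := dist (a 0) (a 1) with hh
  have hDle : D ≤ h * d := hdet.trans (by gcongr)
  have hd0 : 0 < d := he0.trans_le h01
  have hdle : d ≤ σ * V * h := by
    have : d * d ≤ (σ * V * h) * d := by
      calc d * d = d ^ 2 := by ring
        _ ≤ σ * (D * V) := hreg
        _ ≤ σ * ((h * d) * V) := by gcongr
        _ = _ := by ring
    exact le_of_mul_le_mul_right this hd0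
  have hD2 : D ≤ σ * V * h ^ 2 := by
    calc D ≤ h * d := hDle
      _ ≤ h * (σ * V * h) := by gcongr
      _ = _ := by ring
  have hD1 : h ^ 2 ≤ σ * V * D := by
    calc h ^ 2 ≤ d ^ 2 := by gcongr
      _ ≤ _ := hreg
      _ = _ := by ring
  have hAm := hmAB c
  have hBm := hMBA c
  have hB0 : 0 ≤ formB k c := integral_nonneg fun _ => sq_nonneg _
  have hA0 : 0 ≤ formA k c := integral_nonneg fun _ => sq_nonneg _
  have hD0 : 0 ≤ D := abs_nonneg _
  rw [← Real.sqrt_mul (by positivity), ← Real.sqrt_mul (by positivity),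
    ← Real.sqrt_mul (by positivity), ← Real.sqrt_mul (by positivity)]
  constructor
  · apply Real.sqrt_le_sqrt
    calc m / (σ * V) * h * (h * formB k c) = (h ^ 2 / (σ * V)) * (m * formB k c) := by ring
      _ ≤ D * formA k c := by
        gcongr
        rw [div_le_iff₀ (by positivity)]; linarith
  · apply Real.sqrt_le_sqrt
    calc D * formA k c ≤ (σ * V * h ^ 2) * (formB k c / M) := by
          gcongr
          rw [le_div_iff₀ hM]; linarith
      _ = _ := by ring
end
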